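/- (Uniqueness of bridge functions, Lemma B.2.) Assume W-completeness and positivity. If (h₂₂, h₂₁) and (h₂₂′, h₂₁′) are two pairs of real-valued functions each satisfying the observed bridge equations, then h₂₂(ȳ₂, w̄₂, ā₂) = h₂₂′(ȳ₂, w̄₂, ā₂) and h₂₁(ȳ₂, w₁, ā₂) = h₂₁′(ȳ₂, w₁, ā₂) for all arguments. -/

import Mathlib

open MeasureTheory

noncomputable def pr {Ω : Type*} [MeasurableSpace Ω] (P : Measure Ω) (E : Set Ω) : ℝ :=
  (P E).toReal

/-- Conditional probability `P(E | C)` as a real number. -/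
noncomputable def cpr {Ω : Type*} [MeasurableSpace Ω] (P : Measure Ω) (E C : Set Ω) : ℝ :=
  pr P (E ∩ C) / pr P C

/-- Uniqueness of the observed-level bridge functions under W-completeness. -/
theorem bridge_functions_unique
    {Ω : Type*} [MeasurableSpace Ω] (P : MeasureTheory.Measure Ω)
    [MeasureTheory.IsProbabilityMeasure P]
    {U0t U1t A1t A2t Z1t Z2t W1t W2t : Type*} {Yt : Type*}
    [Fintype U0t] [Nonempty U0t] [Fintype U1t] [Nonempty U1t]
    [Fintype Yt] [Nonempty Yt]
    [Fintype A1t] [Nonempty A1t] [Fintype A2t] [Nonempty A2t]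
    [Fintype Z1t] [Nonempty Z1t] [Fintype Z2t] [Nonempty Z2t]
    [Fintype W1t] [Nonempty W1t] [Fintype W2t] [Nonempty W2t]
    (U0 : Ω → U0t) (U1 : Ω → U1t) (Y0 Y1 Y2 : Ω → Yt)
    (A1 : Ω → A1t) (A2 : Ω → A2t) (Z1 : Ω → Z1t) (Z2 : Ω → Z2t)
    (W1 : Ω → W1t) (W2 : Ω → W2t)
    (hpos : ∀ (u0 : U0t) (u1 : U1t) (y0 y1 y2 : Yt) (a1 : A1t) (a2 : A2t)
        (z1 : Z1t) (z2 : Z2t) (w1 : W1t) (w2 : W2t),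
      0 < P {ω | U0 ω = u0 ∧ U1 ω = u1 ∧ Y0 ω = y0 ∧ Y1 ω = y1 ∧ Y2 ω = y2 ∧
        A1 ω = a1 ∧ A2 ω = a2 ∧ Z1 ω = z1 ∧ Z2 ω = z2 ∧ W1 ω = w1 ∧ W2 ω = w2})
    (hWcomp2 : ∀ (g : W1t × W2t → ℝ) (y0 y1 : Yt) (a1 : A1t) (a2 : A2t),
      (∀ (z1 : Z1t) (z2 : Z2t),
        ∑ w1 : W1t, ∑ w2 : W2t, g (w1, w2) *
          cpr P {ω | W1 ω = w1 ∧ W2 ω = w2}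
            {ω | Y0 ω = y0 ∧ Y1 ω = y1 ∧ Z1 ω = z1 ∧ Z2 ω = z2 ∧
              A1 ω = a1 ∧ A2 ω = a2} = 0) →
      ∀ w, g w = 0)
    (hWcomp1 : ∀ (g : W1t → ℝ) (y0 : Yt) (a1 : A1t),
      (∀ z1 : Z1t,
        ∑ w1 : W1t, g w1 *
          cpr P {ω | W1 ω = w1} {ω | Y0 ω = y0 ∧ Z1 ω = z1 ∧ A1 ω = a1} = 0) →
      ∀ w1, g w1 = 0)
    (h22 : Yt → Yt → Yt → W1t → W2t → A1t → A2t → ℝ)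
    (h21 : Yt → Yt → Yt → W1t → A1t → A2t → ℝ)
    (h22' : Yt → Yt → Yt → W1t → W2t → A1t → A2t → ℝ)
    (h21' : Yt → Yt → Yt → W1t → A1t → A2t → ℝ)
    (hob22 : ∀ (y0 y1 y2 : Yt) (z1 : Z1t) (z2 : Z2t) (a1 : A1t) (a2 : A2t),
      cpr P {ω | Y2 ω = y2}
        {ω | Y0 ω = y0 ∧ Y1 ω = y1 ∧ Z1 ω = z1 ∧ Z2 ω = z2 ∧ A1 ω = a1 ∧ A2 ω = a2}
      = ∑ w1 : W1t, ∑ w2 : W2t, h22 y0 y1 y2 w1 w2 a1 a2 *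
          cpr P {ω | W1 ω = w1 ∧ W2 ω = w2}
            {ω | Y0 ω = y0 ∧ Y1 ω = y1 ∧ A1 ω = a1 ∧ A2 ω = a2 ∧ Z1 ω = z1 ∧ Z2 ω = z2})
    (hob21 : ∀ (y0 y1 y2 : Yt) (z1 : Z1t) (a1 : A1t) (a2 : A2t),
      ∑ w1 : W1t, ∑ w2 : W2t, h22 y0 y1 y2 w1 w2 a1 a2 *
          cpr P {ω | Y1 ω = y1} {ω | Y0 ω = y0 ∧ Z1 ω = z1 ∧ A1 ω = a1} *
          cpr P {ω | W1 ω = w1 ∧ W2 ω = w2}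
            {ω | Y0 ω = y0 ∧ Y1 ω = y1 ∧ A1 ω = a1 ∧ Z1 ω = z1}
      = ∑ w1 : W1t, h21 y0 y1 y2 w1 a1 a2 *
          cpr P {ω | W1 ω = w1} {ω | Y0 ω = y0 ∧ A1 ω = a1 ∧ Z1 ω = z1})
    (hob22' : ∀ (y0 y1 y2 : Yt) (z1 : Z1t) (z2 : Z2t) (a1 : A1t) (a2 : A2t),
      cpr P {ω | Y2 ω = y2}
        {ω | Y0 ω = y0 ∧ Y1 ω = y1 ∧ Z1 ω = z1 ∧ Z2 ω = z2 ∧ A1 ω = a1 ∧ A2 ω = a2}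
      = ∑ w1 : W1t, ∑ w2 : W2t, h22' y0 y1 y2 w1 w2 a1 a2 *
          cpr P {ω | W1 ω = w1 ∧ W2 ω = w2}
            {ω | Y0 ω = y0 ∧ Y1 ω = y1 ∧ A1 ω = a1 ∧ A2 ω = a2 ∧ Z1 ω = z1 ∧ Z2 ω = z2})
    (hob21' : ∀ (y0 y1 y2 : Yt) (z1 : Z1t) (a1 : A1t) (a2 : A2t),
      ∑ w1 : W1t, ∑ w2 : W2t, h22' y0 y1 y2 w1 w2 a1 a2 *
          cpr P {ω | Y1 ω = y1} {ω | Y0 ω = y0 ∧ Z1 ω = z1 ∧ A1 ω = a1} *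
          cpr P {ω | W1 ω = w1 ∧ W2 ω = w2}
            {ω | Y0 ω = y0 ∧ Y1 ω = y1 ∧ A1 ω = a1 ∧ Z1 ω = z1}
      = ∑ w1 : W1t, h21' y0 y1 y2 w1 a1 a2 *
          cpr P {ω | W1 ω = w1} {ω | Y0 ω = y0 ∧ A1 ω = a1 ∧ Z1 ω = z1})
    : (∀ (y0 y1 y2 : Yt) (w1 : W1t) (w2 : W2t) (a1 : A1t) (a2 : A2t),
        h22 y0 y1 y2 w1 w2 a1 a2 = h22' y0 y1 y2 w1 w2 a1 a2) ∧
      (∀ (y0 y1 y2 : Yt) (w1 : W1t) (a1 : A1t) (a2 : A2t),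
        h21 y0 y1 y2 w1 a1 a2 = h21' y0 y1 y2 w1 a1 a2) := by
  have H : ∀ (y0 y1 y2 : Yt) (w1 : W1t) (w2 : W2t) (a1 : A1t) (a2 : A2t),
        h22 y0 y1 y2 w1 w2 a1 a2 = h22' y0 y1 y2 w1 w2 a1 a2 := by
    intro y0 y1 y2 w1 w2 a1 a2
    have key := hWcomp2 (fun w => h22 y0 y1 y2 w.1 w.2 a1 a2 - h22' y0 y1 y2 w.1 w.2 a1 a2)
      y0 y1 a1 a2 ?_ (w1, w2)
    · exact sub_eq_zero.mp key
    · intro z1 z2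
      have e : {ω | Y0 ω = y0 ∧ Y1 ω = y1 ∧ Z1 ω = z1 ∧ Z2 ω = z2 ∧ A1 ω = a1 ∧ A2 ω = a2}
          = {ω | Y0 ω = y0 ∧ Y1 ω = y1 ∧ A1 ω = a1 ∧ A2 ω = a2 ∧ Z1 ω = z1 ∧ Z2 ω = z2} := by
        ext ω
        simp only [Set.mem_setOf_eq]
        tauto
      have h := (hob22 y0 y1 y2 z1 z2 a1 a2).symm.trans (hob22' y0 y1 y2 z1 z2 a1 a2)
      simp only [sub_mul, Finset.sum_sub_distrib]
      rw [e]
      exact sub_eq_zero.mpr h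
  refine ⟨H, ?_⟩
  intro y0 y1 y2 w1 a1 a2
  have key := hWcomp1 (fun w => h21 y0 y1 y2 w a1 a2 - h21' y0 y1 y2 w a1 a2) y0 a1 ?_ w1
  · exact sub_eq_zero.mp key
  · intro z1
    have e : {ω | Y0 ω = y0 ∧ Z1 ω = z1 ∧ A1 ω = a1}
        = {ω | Y0 ω = y0 ∧ A1 ω = a1 ∧ Z1 ω = z1} := by
      ext ω
      simp only [Set.mem_setOf_eq]
      tauto
    have h1 := hob21 y0 y1 y2 z1 a1 a2
    simp only [H] at h1
    have h := h1.symm.trans (hob21' y0 y1 y2 z1 a1 a2)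
    simp only [sub_mul, Finset.sum_sub_distrib]
    rw [e]
    exact sub_eq_zero.mpr h
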